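/- Let r₁, r₂, r₃, r₄ ∈ ℝ^{4,2} be lightlike vectors spanning a 3-dimensional subspace on which the bilinear form is nondegenerate (a planar face of a non-degenerate discrete Ribaucour sphere congruence), with ⟨r₁,r₂⟩, ⟨r₂,r₃⟩, ⟨r₃,r₄⟩, ⟨r₄,r₁⟩ all nonzero, and let n ∈ ℝ^{4,2} satisfy ⟨n,r_x⟩ ≠ 0 for x = 1,2,3,4. For each cyclically consecutive pair set a_{xy} := ⟨n,r_x⟩r_y − ⟨n,r_y⟩r_x (so ⟨a_{xy},a_{xy}⟩ ≠ 0). Then the composition of Lie inversions σ_{a₁₂} ∘ σ_{a₂₃} ∘ σ_{a₃₄} ∘ σ_{a₄₁} is the identity map of ℝ^{4,2}. (Flatness of the connection of Lie inversions associated to a discrete Ribaucour sphere congruence, Proposition: a discrete Ribaucour sphere congruence admits a flat connection comprised of Lie inversions mapping adjacent spheres onto each other.) -/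

import Mathlib

/-!
The product `T` of the four inversions is a linear isometry of determinant `(-1)⁴ = 1`, and it
fixes `r₁`, because each inversion carries a sphere of the face to a multiple of the next one
(`lieInv_apply_right`) and the four factors cancel around the face.

Every `T v - v` is a combination of the `a_{xy}`, hence lies in the span of the `r_x` and is
orthogonal to `n`; it is also orthogonal to the fixed vector `r₁`. Since `⟨n, r₁⟩ ≠ 0`, and since
`a₁₂` is orthogonal to `n` but not to `r₁`, each of the two conditions lowers the dimension, so
`T - 1` has rank at most `3 - 2 = 1`. Finally, an isometry of determinant `1` differing from the
identity by a map of rank at most one is the identity (`isometry_eq_id`): reflections are excluded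
by the determinant, and the form admits no isometric transvections.
-/

noncomputable section

/-- The vector space ℝ^{4,2}, modeled as `Fin 6 → ℝ`. -/
abbrev R42 : Type := Fin 6 → ℝ

/-- The symmetric bilinear form of signature (4,2) on ℝ^{4,2}. -/
def bform : R42 →ₗ[ℝ] R42 →ₗ[ℝ] ℝ :=
  LinearMap.mk₂ ℝ
    (fun x y => x 0 * y 0 + x 1 * y 1 + x 2 * y 2 + x 3 * y 3 - x 4 * y 4 - x 5 * y 5)
    (fun x x' y => by simp only [Pi.add_apply]; ring)
    (fun c x y => by simp only [Pi.smul_apply, smul_eq_mul]; ring)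
    (fun x y y' => by simp only [Pi.add_apply]; ring)
    (fun c x y => by simp only [Pi.smul_apply, smul_eq_mul]; ring)

/-- A lightlike vector: nonzero and isotropic. Represents an oriented 2-sphere. -/
def IsLightlike (v : R42) : Prop := v ≠ 0 ∧ bform v v = 0

/-- The Lie inversion with respect to the linear sphere complex determined by `a`. -/
def lieInv (a r : R42) : R42 := r - (2 * bform r a / bform a a) • a

lemma bform_apply (x y : R42) : bform x y =
    x 0 * y 0 + x 1 * y 1 + x 2 * y 2 + x 3 * y 3 - x 4 * y 4 - x 5 * y 5 := rfl

lemma bform_comm (x y : R42) : bform x y = bform y x := by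
  simp only [bform_apply]; ring

lemma bform_nondeg (u : R42) (h : ∀ w, bform w u = 0) : u = 0 := by
  ext i
  have := h (Pi.single i 1)
  fin_cases i <;> simpa [bform_apply, Pi.single_apply] using this

/-- The Lie inversion as a linear map: a rank-one perturbation of the identity, which Mathlib calls
a transvection even though the linear form need not vanish on `a`. -/
def lieInvL (a : R42) : R42 →ₗ[ℝ] R42 :=
  LinearMap.transvection (-(2 / bform a a) • bform a) a

lemma lieInvL_apply (a r : R42) : lieInvL a r = lieInv a r := by
  rw [lieInvL, LinearMap.transvection.apply, lieInv, bform_comm r a]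
  simp only [LinearMap.smul_apply, smul_eq_mul, sub_eq_add_neg, ← neg_smul]
  congr 2
  ring

lemma det_lieInvL (a : R42) (ha : bform a a ≠ 0) : LinearMap.det (lieInvL a) = -1 := by
  rw [lieInvL, LinearMap.transvection.det]
  simp only [LinearMap.smul_apply, smul_eq_mul]
  field_simp
  norm_num

lemma bform_lieInv (a v w : R42) (ha : bform a a ≠ 0) :
    bform (lieInv a v) (lieInv a w) = bform v w := by
  simp only [lieInv, map_sub, map_smul, LinearMap.sub_apply, LinearMap.smul_apply, smul_eq_mul,
    bform_comm a w]
  field_simp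
  ring

lemma bform_self_combo {x y : R42} (hx : bform x x = 0) (hy : bform y y = 0) (p q : ℝ) :
    bform (p • y - q • x) (p • y - q • x) = -2 * p * q * bform x y := by
  simp only [map_sub, map_smul, LinearMap.sub_apply, LinearMap.smul_apply, smul_eq_mul,
    bform_comm y x, hx, hy]
  ring

/-- The inversion attached to an edge carries one sphere of that edge to a multiple of the other. -/
lemma lieInv_apply_right {x y : R42} (hx : bform x x = 0) (hy : bform y y = 0)
    (hxy : bform x y ≠ 0) {p q : ℝ} (hp : p ≠ 0) (hq : q ≠ 0) :
    lieInv (p • y - q • x) y = (q / p) • x := by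
  have h : 2 * bform y (p • y - q • x) / bform (p • y - q • x) (p • y - q • x) = 1 / p := by
    rw [bform_self_combo hx hy]
    simp only [map_sub, map_smul, smul_eq_mul, bform_comm y x, hy]
    field_simp
    ring
  rw [lieInv, h, smul_sub, smul_smul, smul_smul, one_div_mul_cancel hp, one_smul, sub_sub_cancel,
    one_div_mul_eq_div]

lemma lieInv_sub_mem {W : Submodule ℝ R42} {a : R42} (ha : a ∈ W) (v x : R42) (h : x - v ∈ W) :
    lieInv a x - v ∈ W := by
  rw [lieInv, sub_right_comm]
  exact W.sub_mem h (W.smul_mem _ ha)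

lemma finrank_inf_ker_lt (W : Submodule ℝ R42) (φ : R42 →ₗ[ℝ] ℝ) (x : R42) (hx : x ∈ W)
    (h : φ x ≠ 0) :
    Module.finrank ℝ (W ⊓ LinearMap.ker φ : Submodule ℝ R42) < Module.finrank ℝ W := by
  refine Submodule.finrank_lt_finrank_of_lt (lt_of_le_of_ne inf_le_left fun he => h ?_)
  rw [← he] at hx
  exact hx.2

/-- An isometry of determinant one which differs from the identity by a map of rank at most one
is the identity. -/
lemma isometry_eq_id (T : R42 →ₗ[ℝ] R42) (hT : ∀ v w, bform (T v) (T w) = bform v w)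
    (hdet : LinearMap.det T = 1) (u : R42) (hu : ∀ v, ∃ c : ℝ, c • u = T v - v) (v : R42) :
    T v = v := by
  by_cases hu0 : u = 0
  · obtain ⟨c, hc⟩ := hu v
    rw [hu0, smul_zero] at hc
    exact (sub_eq_zero.mp hc.symm)
  obtain ⟨w, hw⟩ : ∃ w, bform w u ≠ 0 := by
    by_contra! h
    exact hu0 (bform_nondeg u h)
  -- The coefficient of `T v - v` along `u`, read off by pairing with `w`.
  let f : Module.Dual ℝ R42 := (bform w u)⁻¹ • (bform w ∘ₗ (T - LinearMap.id))
  have hf : ∀ x, T x = x + f x • u := by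
    intro x
    obtain ⟨c, hc⟩ := hu x
    have : f x = c := by
      simp only [f, LinearMap.smul_apply, LinearMap.comp_apply, LinearMap.sub_apply,
        LinearMap.id_apply, ← hc, map_smul, smul_eq_mul]
      field_simp
    rw [this, hc, add_sub_cancel]
  have hTt : T = LinearMap.transvection f u := LinearMap.ext hf
  have hfu : f u = 0 := by
    rw [hTt, LinearMap.transvection.det] at hdet
    linarith
  have key : ∀ x, f v * bform x u + f x * bform v u + f v * f x * bform u u = 0 := by
    intro x
    have h := hT v x
    rw [hf v, hf x] at h
    simp only [map_add, map_smul, LinearMap.add_apply, LinearMap.smul_apply, smul_eq_mul,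
      bform_comm u x] at h
    linarith
  -- Otherwise `u` would be orthogonal to itself, then to `v`, then to `w`.
  have hfv : f v = 0 := by
    by_contra hne
    have hvu : bform v u = 0 := by
      have h1 := key u
      rw [hfu, zero_mul, mul_zero, zero_mul, add_zero, add_zero] at h1
      have huu : bform u u = 0 := (mul_eq_zero.mp h1).resolve_left hne
      have h2 := key v
      rw [huu, mul_zero, add_zero, ← two_mul] at h2
      simpa [hne] using h2
    have h1 := key u
    have h3 := key w
    rw [hfu, zero_mul, mul_zero, zero_mul, add_zero, add_zero] at h1
    rw [hvu, (mul_eq_zero.mp h1).resolve_left hne, mul_zero, mul_zero, add_zero, add_zero] at h3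
    exact (mul_ne_zero hne hw) h3
  rw [hf v, hfv, zero_smul, add_zero]

/-- Flatness of the connection of Lie inversions associated to a face of
a non-degenerate discrete Ribaucour sphere congruence: for four lightlike vectors
spanning a 3-dimensional subspace on which the form is nondegenerate, the composition
of the four Lie inversions `σ_{a₁₂} ∘ σ_{a₂₃} ∘ σ_{a₃₄} ∘ σ_{a₄₁}` with
`a_{xy} = ⟨n,r_x⟩r_y − ⟨n,r_y⟩r_x` is the identity. -/
theorem stmt_7 (n r₁ r₂ r₃ r₄ : R42)
    (h₁ : IsLightlike r₁) (h₂ : IsLightlike r₂)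
    (h₃ : IsLightlike r₃) (h₄ : IsLightlike r₄)
    (hdim : Module.finrank ℝ (Submodule.span ℝ ({r₁, r₂, r₃, r₄} : Set R42)) = 3)
    (hnd : ∀ v ∈ Submodule.span ℝ ({r₁, r₂, r₃, r₄} : Set R42),
      (∀ w ∈ Submodule.span ℝ ({r₁, r₂, r₃, r₄} : Set R42), bform v w = 0) → v = 0)
    (h12 : bform r₁ r₂ ≠ 0) (h23 : bform r₂ r₃ ≠ 0)
    (h34 : bform r₃ r₄ ≠ 0) (h41 : bform r₄ r₁ ≠ 0)
    (hn1 : bform n r₁ ≠ 0) (hn2 : bform n r₂ ≠ 0)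
    (hn3 : bform n r₃ ≠ 0) (hn4 : bform n r₄ ≠ 0)
    (a₁₂ a₂₃ a₃₄ a₄₁ : R42)
    (ha₁₂ : a₁₂ = bform n r₁ • r₂ - bform n r₂ • r₁)
    (ha₂₃ : a₂₃ = bform n r₂ • r₃ - bform n r₃ • r₂)
    (ha₃₄ : a₃₄ = bform n r₃ • r₄ - bform n r₄ • r₃)
    (ha₄₁ : a₄₁ = bform n r₄ • r₁ - bform n r₁ • r₄) :
    (bform a₁₂ a₁₂ ≠ 0 ∧ bform a₂₃ a₂₃ ≠ 0 ∧ bform a₃₄ a₃₄ ≠ 0 ∧ bform a₄₁ a₄₁ ≠ 0) ∧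
    ∀ v : R42, lieInv a₁₂ (lieInv a₂₃ (lieInv a₃₄ (lieInv a₄₁ v))) = v := by
  have mem : ∀ x ∈ ({r₁, r₂, r₃, r₄} : Set R42),
      x ∈ Submodule.span ℝ ({r₁, r₂, r₃, r₄} : Set R42) := fun x hx => Submodule.subset_span hx
  have m₁ := mem r₁ (by simp)
  have m₂ := mem r₂ (by simp)
  have m₃ := mem r₃ (by simp)
  have m₄ := mem r₄ (by simp)
  set S := Submodule.span ℝ ({r₁, r₂, r₃, r₄} : Set R42) with hS
  have hself : ∀ {x y : R42}, IsLightlike x → IsLightlike y → bform x y ≠ 0 → ∀ {p q : ℝ},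
      p ≠ 0 → q ≠ 0 → bform (p • y - q • x) (p • y - q • x) ≠ 0 := by
    intro x y hx hy hxy p q hp hq
    rw [bform_self_combo hx.2 hy.2]
    simp [hp, hq, hxy]
  have n₁₂ : bform a₁₂ a₁₂ ≠ 0 := ha₁₂ ▸ hself h₁ h₂ h12 hn1 hn2
  have n₂₃ : bform a₂₃ a₂₃ ≠ 0 := ha₂₃ ▸ hself h₂ h₃ h23 hn2 hn3
  have n₃₄ : bform a₃₄ a₃₄ ≠ 0 := ha₃₄ ▸ hself h₃ h₄ h34 hn3 hn4
  have n₄₁ : bform a₄₁ a₄₁ ≠ 0 := ha₄₁ ▸ hself h₄ h₁ h41 hn4 hn1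
  refine ⟨⟨n₁₂, n₂₃, n₃₄, n₄₁⟩, ?_⟩
  let T : R42 →ₗ[ℝ] R42 := lieInvL a₁₂ ∘ₗ lieInvL a₂₃ ∘ₗ lieInvL a₃₄ ∘ₗ lieInvL a₄₁
  have hTa : ∀ v, T v = lieInv a₁₂ (lieInv a₂₃ (lieInv a₃₄ (lieInv a₄₁ v))) := by
    intro v
    simp only [T, LinearMap.comp_apply, lieInvL_apply]
  have hTiso : ∀ v w, bform (T v) (T w) = bform v w := by
    intro v w
    rw [hTa, hTa, bform_lieInv _ _ _ n₁₂, bform_lieInv _ _ _ n₂₃, bform_lieInv _ _ _ n₃₄,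
      bform_lieInv _ _ _ n₄₁]
  have hdet : LinearMap.det T = 1 := by
    simp only [T, LinearMap.det_comp, det_lieInvL _ n₁₂, det_lieInvL _ n₂₃, det_lieInvL _ n₃₄,
      det_lieInvL _ n₄₁]
    norm_num
  have hTr : T r₁ = r₁ := by
    have e₁ : lieInvL a₄₁ r₁ = (bform n r₁ / bform n r₄) • r₄ := by
      rw [lieInvL_apply, ha₄₁, lieInv_apply_right h₄.2 h₁.2 h41 hn4 hn1]
    have e₄ : lieInvL a₃₄ r₄ = (bform n r₄ / bform n r₃) • r₃ := by
      rw [lieInvL_apply, ha₃₄, lieInv_apply_right h₃.2 h₄.2 h34 hn3 hn4]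
    have e₃ : lieInvL a₂₃ r₃ = (bform n r₃ / bform n r₂) • r₂ := by
      rw [lieInvL_apply, ha₂₃, lieInv_apply_right h₂.2 h₃.2 h23 hn2 hn3]
    have e₂ : lieInvL a₁₂ r₂ = (bform n r₂ / bform n r₁) • r₁ := by
      rw [lieInvL_apply, ha₁₂, lieInv_apply_right h₁.2 h₂.2 h12 hn1 hn2]
    simp only [T, LinearMap.comp_apply, e₁, e₂, e₃, e₄, map_smul, smul_smul]
    convert one_smul ℝ r₁ using 2
    field_simp
  -- `U` contains all the `a_{xy}`; its part orthogonal to `r₁` contains the range of `T - 1`.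
  set U : Submodule ℝ R42 := S ⊓ LinearMap.ker (bform n) with hU
  set L : Submodule ℝ R42 := U ⊓ LinearMap.ker (bform r₁) with hL
  have hmemU : ∀ {x y : R42}, x ∈ S → y ∈ S → bform n x • y - bform n y • x ∈ U := by
    intro x y hx hy
    refine ⟨S.sub_mem (S.smul_mem _ hy) (S.smul_mem _ hx), ?_⟩
    simp only [SetLike.mem_coe, LinearMap.mem_ker, map_sub, map_smul, smul_eq_mul]
    ring
  have u₁₂ : a₁₂ ∈ U := ha₁₂ ▸ hmemU m₁ m₂
  have u₂₃ : a₂₃ ∈ U := ha₂₃ ▸ hmemU m₂ m₃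
  have u₃₄ : a₃₄ ∈ U := ha₃₄ ▸ hmemU m₃ m₄
  have u₄₁ : a₄₁ ∈ U := ha₄₁ ▸ hmemU m₄ m₁
  have hrk : Module.finrank ℝ L ≤ 1 := by
    have c₁ := finrank_inf_ker_lt S (bform n) r₁ m₁ hn1
    have c₂ := finrank_inf_ker_lt U (bform r₁) a₁₂ u₁₂ (by
      rw [ha₁₂, map_sub, map_smul, map_smul, h₁.2, smul_zero, sub_zero]
      exact mul_ne_zero hn1 h12)
    rw [← hU] at c₁
    rw [← hL] at c₂
    omega
  have hTL : ∀ v, T v - v ∈ L := by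
    intro v
    refine ⟨?_, ?_⟩
    · rw [hTa]
      refine lieInv_sub_mem u₁₂ _ _ (lieInv_sub_mem u₂₃ _ _ (lieInv_sub_mem u₃₄ _ _
        (lieInv_sub_mem u₄₁ _ _ ?_)))
      rw [sub_self]
      exact U.zero_mem
    · have h := hTiso r₁ v
      rw [hTr] at h
      simp only [SetLike.mem_coe, LinearMap.mem_ker, map_sub, h, sub_self]
  obtain ⟨u, hu⟩ := finrank_le_one_iff.mp hrk
  intro v
  rw [← hTa]
  refine isometry_eq_id T hTiso hdet u (fun x => ?_) v
  obtain ⟨c, hc⟩ := hu ⟨T x - x, hTL x⟩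
  exact ⟨c, congrArg Subtype.val hc⟩
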